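/- Let Γ be a finite extensive-form game with perfect recall. A behavioral strategy profile β* is a subgame perfect equilibrium in behavioral strategies if and only if there exist a behavioral strategy profile β̃* and a belief system μ* such that: (i) β*^i_{I_i^j}(a') = 0 for all i ∈ N, j ∈ M_i and a', a'' ∈ A(I_i^j) with C^i_{I_i^j}(I_i^j|β*) > 0 and u^i(a'', ϱ^i_{I_i^j}(β*^{-I_i^j}, β̃*), μ* | I_i^j) > u^i(a', ϱ^i_{I_i^j}(β*^{-I_i^j}, β̃*), μ* | I_i^j); (ii) β̃*^i_{I_i^j}(a') = 0 for all i, j and a', a'' ∈ A(I_i^j) with u^i(a'', ϱ^i_{I_i^j}(β*^{-I_i^j}, β̃*), μ* | I_i^j) > u^i(a', ϱ^i_{I_i^j}(β*^{-I_i^j}, β̃*), μ* | I_i^j); and (iii) Y^i(I_i^j|β*) μ*^i_{I_i^j}(h) = Y^i(h|β*) for all i, j, h ∈ I_i^j. -/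

import Mathlib

open scoped Classical

noncomputable section

/-- A finite extensive-form game.  Actions are labelled by natural numbers drawn from the
finite pool `actFinset`; a history is the list of actions taken so far; players are `Fin n`
and `P h = none` means that the chance player moves after `h`.  The information sets of
player `i` are `Info i j` for `j < m i`, and `infoIdx h` is the index of the information
set containing a nonterminal history `h` at which some player moves.  Payoffs `u i h` are
relevant on terminal histories. -/
structure EFG where
  n : ℕ
  actFinset : Finset ℕ
  H : Finset (List ℕ)
  P : List ℕ → Option (Fin n)
  fc : List ℕ → ℕ → ℝ
  m : Fin n → ℕ
  Info : Fin n → ℕ → Finset (List ℕ)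
  infoIdx : List ℕ → ℕ
  u : Fin n → List ℕ → ℝ
  empty_mem : ([] : List ℕ) ∈ H
  prefixClosed : ∀ h ∈ H, ∀ h' : List ℕ, h' <+: h → h' ∈ H
  act_mem : ∀ (h : List ℕ) (a : ℕ), h ++ [a] ∈ H → a ∈ actFinset
  fc_nonneg : ∀ h a, 0 ≤ fc h a
  fc_sum : ∀ h ∈ H, P h = none → (∃ a, h ++ [a] ∈ H) →
    ∑ a ∈ actFinset.filter (fun a => h ++ [a] ∈ H), fc h a = 1
  info_spec : ∀ (i : Fin n) (j : ℕ) (h : List ℕ), j < m i →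
    (h ∈ Info i j ↔ h ∈ H ∧ P h = some i ∧ (∃ a, h ++ [a] ∈ H) ∧ infoIdx h = j)
  infoIdx_lt : ∀ (i : Fin n), ∀ h ∈ H, P h = some i → (∃ a, h ++ [a] ∈ H) → infoIdx h < m i
  info_nonempty : ∀ (i : Fin n) (j : ℕ), j < m i → (Info i j).Nonempty
  info_actions : ∀ (i : Fin n) (j : ℕ), j < m i → ∀ h ∈ Info i j, ∀ h' ∈ Info i j,
    ∀ a : ℕ, (h ++ [a] ∈ H ↔ h' ++ [a] ∈ H)
  act_unique : ∀ (h h' : List ℕ) (a : ℕ), h ∈ H → h' ∈ H → h ++ [a] ∈ H → h' ++ [a] ∈ H →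
    P h = P h' ∧ infoIdx h = infoIdx h'

namespace EFG

/-- Behavioral strategy profiles (player, information-set index, action ↦ probability). -/
abbrev Profile (G : EFG) : Type := Fin G.n → ℕ → ℕ → ℝ

/-- Belief systems (player, information-set index, history ↦ probability). -/
abbrev Belief (G : EFG) : Type := Fin G.n → ℕ → List ℕ → ℝ

variable (G : EFG)

/-- The set `Z` of terminal histories. -/
def Zset : Finset (List ℕ) := G.H.filter fun h => ∀ a : ℕ, h ++ [a] ∉ G.H

/-- The set `A(h)` of actions available after a history. -/
def A (h : List ℕ) : Finset ℕ := G.actFinset.filter fun a => h ++ [a] ∈ G.H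

/-- The common action set `A(I_i^j)` of an information set. -/
def infoA (i : Fin G.n) (j : ℕ) : Finset ℕ := (G.Info i j).sup fun h => G.A h

/-- A behavioral strategy of player `i`: a probability distribution on `A(I_i^j)` for
each information set `I_i^j`. -/
def IsBehStrategy (i : Fin G.n) (b : ℕ → ℕ → ℝ) : Prop :=
  ∀ j < G.m i, (∀ a ∈ G.infoA i j, 0 ≤ b j a) ∧ ∑ a ∈ G.infoA i j, b j a = 1

/-- A behavioral strategy profile. -/
def IsBehProfile (β : G.Profile) : Prop := ∀ i : Fin G.n, G.IsBehStrategy i (β i)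

/-- The probability of action `a` at history `h`: the chance distribution if the chance
player moves, and the mover's behavioral strategy otherwise. -/
def moveProb (β : G.Profile) (h : List ℕ) (a : ℕ) : ℝ :=
  (G.P h).elim (G.fc h a) fun i => β i (G.infoIdx h) a

/-- Player `i`'s record `X_i` of the information sets he encounters along a history and the
actions he takes at them, accumulated starting from the prefix `pre`. -/
def recordFrom (i : Fin G.n) : List ℕ → List ℕ → List (ℕ × ℕ)
  | _, [] => []
  | pre, b :: rest =>
    (if G.P pre = some i then [(G.infoIdx pre, b)] else []) ++ recordFrom i (pre ++ [b]) rest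

/-- Perfect recall. -/
def PerfectRecall : Prop :=
  ∀ (i : Fin G.n) (j : ℕ), j < G.m i →
    ∀ h ∈ G.Info i j, ∀ h' ∈ G.Info i j, G.recordFrom i [] h = G.recordFrom i [] h'

/-- Product of the move probabilities along `rest`, continuing from the prefix `pre`. -/
def prodAlong (β : G.Profile) : List ℕ → List ℕ → ℝ
  | _, [] => 1
  | pre, b :: rest => G.moveProb β pre b * prodAlong β (pre ++ [b]) rest

/-- `ω(h|β)`: the probability that the moves along `h` are played under `β`. -/
def omega (β : G.Profile) (h : List ℕ) : ℝ := G.prodAlong β [] h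

/-- `ω(I_i^j|β)`. -/
def omegaInfo (i : Fin G.n) (j : ℕ) (β : G.Profile) : ℝ := ∑ h ∈ G.Info i j, G.omega β h

/-- Product of the move probabilities along `rest` from `pre`, disregarding player `i`'s
own moves. -/
def prodAlongNot (i : Fin G.n) (β : G.Profile) : List ℕ → List ℕ → ℝ
  | _, [] => 1
  | pre, b :: rest =>
    (if G.P pre = some i then 1 else G.moveProb β pre b) * prodAlongNot i β (pre ++ [b]) rest

/-- `S^i(h|β)`: probability of the moves along `h`, disregarding player `i`'s own moves. -/
def Sh (i : Fin G.n) (β : G.Profile) (h : List ℕ) : ℝ := G.prodAlongNot i β [] h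

/-- `S^i(I_i^j|β)`. -/
def SInfo (i : Fin G.n) (j : ℕ) (β : G.Profile) : ℝ := ∑ h ∈ G.Info i j, G.Sh i β h

/-- Product of the move probabilities along `rest` from `pre`, with the factor at prefixes
lying in `I_i^j` omitted. -/
def prodAlongSkip (i : Fin G.n) (j : ℕ) (β : G.Profile) : List ℕ → List ℕ → ℝ
  | _, [] => 1
  | pre, b :: rest =>
    (if pre ∈ G.Info i j then 1 else G.moveProb β pre b) * prodAlongSkip i j β (pre ++ [b]) rest

/-- `q ∈ M(a, I_i^j)`: `I_i^q` is a first information set of player `i` after action `a`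
(every history in `I_i^q` contains `a`, with no later action of `a` lying in any action set
of player `i`). -/
def FirstAfter (i : Fin G.n) (a : ℕ) (q : ℕ) : Prop :=
  q < G.m i ∧ ∀ h ∈ G.Info i q, ∃ l₁ l₂ : List ℕ,
    h = l₁ ++ a :: l₂ ∧ ∀ b ∈ l₂, ∀ p < G.m i, b ∉ G.infoA i p

/-- `q ∈ M(I_i^j) = ∪_{a ∈ A(I_i^j)} M(a, I_i^j)`. -/
def MInfo (i : Fin G.n) (j : ℕ) (q : ℕ) : Prop := ∃ a ∈ G.infoA i j, G.FirstAfter i a q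

/-- `q ∈ Λ(a, I_i^j)`: every history in `I_i^q` contains the action `a`. -/
def LambdaSet (i : Fin G.n) (a : ℕ) (q : ℕ) : Prop :=
  q < G.m i ∧ ∀ h ∈ G.Info i q, ∃ l₁ l₂ : List ℕ, h = l₁ ++ a :: l₂

/-- `ϱ^i_{I_i^j}(β, β̃)`: replace player `i`'s component of `β` by that of `β̃` at every
information set `I_i^q` such that some history in `I_i^q` contains an action of `A(I_i^j)`. -/
def rho (i : Fin G.n) (j : ℕ) (β βt : G.Profile) : G.Profile := fun p q =>
  if p = i ∧ ∃ h ∈ G.Info i q, ∃ b ∈ h, b ∈ G.infoA i j then βt i q else β p q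

/-- A belief system: a probability distribution on each information set. -/
def IsBelief (μ : G.Belief) : Prop :=
  ∀ (i : Fin G.n) (j : ℕ), j < G.m i →
    (∀ h ∈ G.Info i j, 0 ≤ μ i j h) ∧ ∑ h ∈ G.Info i j, μ i j h = 1

/-- A self-independent belief system for `β`:
`S^i(I_i^j|β) · μ^i_{I_i^j}(h) = S^i(h|β)`. -/
def SelfIndep (β : G.Profile) (μ : G.Belief) : Prop :=
  ∀ (i : Fin G.n) (j : ℕ), j < G.m i → ∀ h ∈ G.Info i j,
    G.SInfo i j β * μ i j h = G.Sh i β h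

/-- Auxiliary for `ν`: scan `rest` from `pre` for the subhistory lying in `I_i^j`, then
weight by the belief and multiply the move probabilities of the remaining moves (the move
taken at the subhistory itself being skipped). -/
def nuAux (i : Fin G.n) (j : ℕ) (β : G.Profile) (w : List ℕ → ℝ) : List ℕ → List ℕ → ℝ
  | _, [] => 0
  | pre, b :: rest =>
    if pre ∈ G.Info i j then w pre * G.prodAlong β (pre ++ [b]) rest
    else nuAux i j β w (pre ++ [b]) rest

/-- `ν^i_{I_i^j}(h | a, β^{-I_i^j}, μ)` (it does not involve the component of `β` at
`I_i^j`). -/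
def nu (i : Fin G.n) (j : ℕ) (β : G.Profile) (μ : G.Belief) (h : List ℕ) : ℝ :=
  G.nuAux i j β (μ i j) [] h

/-- `u^i((a, β^{-I_i^j}) ∧ I_i^j)`. -/
def uWedgeAct (i : Fin G.n) (j : ℕ) (a : ℕ) (β : G.Profile) : ℝ :=
  ∑ h ∈ G.Zset.filter (fun h => a ∈ h), G.u i h * G.prodAlongSkip i j β [] h

/-- `u^i(β ∧ I_i^j)`. -/
def uWedge (i : Fin G.n) (j : ℕ) (β : G.Profile) : ℝ :=
  ∑ h ∈ G.Zset.filter (fun h => ∃ b ∈ h, b ∈ G.infoA i j), G.u i h * G.omega β h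

/-- The conditional expected payoff `u^i(a, β^{-I_i^j}, μ | I_i^j)`. -/
def uCond (i : Fin G.n) (j : ℕ) (a : ℕ) (β : G.Profile) (μ : G.Belief) : ℝ :=
  ∑ h ∈ G.Zset.filter (fun h => a ∈ h), G.u i h * G.nu i j β μ h

/-- The expected payoff `u^i(β)`. -/
def uExp (i : Fin G.n) (β : G.Profile) : ℝ := ∑ h ∈ G.Zset, G.u i h * G.omega β h

/-- The profile obtained from `β` by replacing all of player `i`'s components by `b`. -/
def replace (β : G.Profile) (i : Fin G.n) (b : ℕ → ℕ → ℝ) : G.Profile :=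
  fun p => if p = i then b else β p

/-- `β` is a Nash equilibrium in behavioral strategies. -/
def IsNash (β : G.Profile) : Prop :=
  G.IsBehProfile β ∧ ∀ (i : Fin G.n) (b : ℕ → ℕ → ℝ), G.IsBehStrategy i b →
    G.uExp i (G.replace β i b) ≤ G.uExp i β

/-- `(β, β̃, μ)` satisfies the Nash characterization (Definition 2 of the paper). -/
def NashChar (β βt : G.Profile) (μ : G.Belief) : Prop :=
  (∀ (i : Fin G.n) (j : ℕ), j < G.m i → ∀ a' ∈ G.infoA i j, ∀ a'' ∈ G.infoA i j,
    G.uWedgeAct i j a' (G.rho i j β βt) < G.uWedgeAct i j a'' (G.rho i j β βt) →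
    β i j a' = 0) ∧
  (∀ (i : Fin G.n) (j : ℕ), j < G.m i → ∀ a' ∈ G.infoA i j, ∀ a'' ∈ G.infoA i j,
    G.uCond i j a' (G.rho i j β βt) μ < G.uCond i j a'' (G.rho i j β βt) μ →
    βt i j a' = 0) ∧
  G.IsBelief μ ∧ G.SelfIndep β μ

/-- `r` is the root of a subgame: every information set lies entirely inside or entirely
outside the set of histories extending `r`. -/
def IsSubgameRoot (r : List ℕ) : Prop :=
  r ∈ G.H ∧ ∀ (i : Fin G.n) (j : ℕ), j < G.m i →
    (∀ h ∈ G.Info i j, r <+: h) ∨ ∀ h ∈ G.Info i j, ¬ r <+: h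

/-- The depth `g` of the smallest subgame containing `A(I_i^j)` (the length of the longest
subgame root preceding every history of `I_i^j`). -/
def sgDepthInfo (i : Fin G.n) (j : ℕ) : ℕ :=
  (G.H.filter fun r => G.IsSubgameRoot r ∧ ∀ h ∈ G.Info i j, r <+: h).sup List.length

/-- The depth `q(h)` of the smallest subgame containing the last action of `h`. -/
def sgDepthHist (h : List ℕ) : ℕ :=
  (G.H.filter fun r => G.IsSubgameRoot r ∧ r <+: h.dropLast).sup List.length

/-- `C^i_{I_i^j}(h|β)`: product of move probabilities along `h` within the smallest subgame
containing `A(I_i^j)`. -/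
def Ch (i : Fin G.n) (j : ℕ) (β : G.Profile) (h : List ℕ) : ℝ :=
  G.prodAlong β (h.take (G.sgDepthInfo i j)) (h.drop (G.sgDepthInfo i j))

/-- `C^i_{I_i^j}(I_i^j|β)`. -/
def CInfo (i : Fin G.n) (j : ℕ) (β : G.Profile) : ℝ := ∑ h ∈ G.Info i j, G.Ch i j β h

/-- `u^i((a, β^{-I_i^j}) ⋄ I_i^j)`. -/
def uDiamondAct (i : Fin G.n) (j : ℕ) (a : ℕ) (β : G.Profile) : ℝ :=
  ∑ h ∈ G.Zset.filter (fun h => a ∈ h), G.u i h *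
    G.prodAlongSkip i j β (h.take (G.sgDepthInfo i j)) (h.drop (G.sgDepthInfo i j))

/-- `Y^i(h|β)`: like `S^i(h|β)` but within the smallest subgame containing the last action
of `h`. -/
def Yh (i : Fin G.n) (β : G.Profile) (h : List ℕ) : ℝ :=
  G.prodAlongNot i β (h.take (G.sgDepthHist h)) (h.drop (G.sgDepthHist h))

/-- `Y^i(I_i^j|β)`. -/
def YInfo (i : Fin G.n) (j : ℕ) (β : G.Profile) : ℝ := ∑ h ∈ G.Info i j, G.Yh i β h

/-- The belief condition `Y^i(I_i^j|β) · μ^i_{I_i^j}(h) = Y^i(h|β)`. -/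
def YConsistent (β : G.Profile) (μ : G.Belief) : Prop :=
  ∀ (i : Fin G.n) (j : ℕ), j < G.m i → ∀ h ∈ G.Info i j,
    G.YInfo i j β * μ i j h = G.Yh i β h

/-- The expected payoff of player `i` in the subgame rooted at `r` (payoffs of terminal
histories extending `r`, weighted by the move probabilities within the subgame). -/
def uExpFrom (i : Fin G.n) (β : G.Profile) (r : List ℕ) : ℝ :=
  ∑ h ∈ G.Zset.filter (fun h => r <+: h), G.u i h * G.prodAlong β r (h.drop r.length)

/-- `β` is a subgame perfect equilibrium in behavioral strategies: its restriction to every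
subgame is a Nash equilibrium in behavioral strategies of that subgame. -/
def IsSubgamePerfect (β : G.Profile) : Prop :=
  G.IsBehProfile β ∧ ∀ r : List ℕ, G.IsSubgameRoot r →
    ∀ (i : Fin G.n) (b : ℕ → ℕ → ℝ), G.IsBehStrategy i b →
      G.uExpFrom i (G.replace β i b) r ≤ G.uExpFrom i β r

/-- `(β, β̃, μ)` satisfies the subgame perfect characterization (Definition 6 of the
paper). -/
def SubgameChar (β βt : G.Profile) (μ : G.Belief) : Prop :=
  (∀ (i : Fin G.n) (j : ℕ), j < G.m i → ∀ a' ∈ G.infoA i j, ∀ a'' ∈ G.infoA i j,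
    G.uDiamondAct i j a' (G.rho i j β βt) < G.uDiamondAct i j a'' (G.rho i j β βt) →
    β i j a' = 0) ∧
  (∀ (i : Fin G.n) (j : ℕ), j < G.m i → ∀ a' ∈ G.infoA i j, ∀ a'' ∈ G.infoA i j,
    G.uCond i j a' (G.rho i j β βt) μ < G.uCond i j a'' (G.rho i j β βt) μ →
    βt i j a' = 0) ∧
  G.IsBelief μ ∧ G.YConsistent β μ

/-- `(β, μ)` is a semi-sequential equilibrium. -/
def SemiSeqEq (β : G.Profile) (μ : G.Belief) : Prop :=
  G.IsBehProfile β ∧ G.IsBelief μ ∧ G.SelfIndep β μ ∧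
  ∀ (i : Fin G.n) (j : ℕ), j < G.m i → ∀ a' ∈ G.infoA i j, ∀ a'' ∈ G.infoA i j,
    G.uCond i j a' β μ < G.uCond i j a'' β μ → β i j a' = 0

/-- `(β, μ)` is a subgame perfect semi-sequential equilibrium. -/
def SubgameSemiSeqEq (β : G.Profile) (μ : G.Belief) : Prop :=
  G.IsBehProfile β ∧ G.IsBelief μ ∧ G.YConsistent β μ ∧
  ∀ (i : Fin G.n) (j : ℕ), j < G.m i → ∀ a' ∈ G.infoA i j, ∀ a'' ∈ G.infoA i j,
    G.uCond i j a' β μ < G.uCond i j a'' β μ → β i j a' = 0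

/-- `d(I_i^j)`: the number of information sets of player `i` containing a prefix of some
history of `I_i^j` (counting `I_i^j` itself). -/
def dInfo (i : Fin G.n) (j : ℕ) : ℕ :=
  ((Finset.range (G.m i)).filter
    (fun q => ∃ h ∈ G.Info i j, ∃ p : List ℕ, p <+: h ∧ p ∈ G.Info i q)).card

end EFG

/-!
Replacing player `i`'s strategy `t` by `b` in a subgame changes his payoff by the expected sum of
the one-shot gains along play under `b`, each valued by continuing with `t`. By perfect recall, the
histories of one information set are reached in proportions that do not depend on player `i`'s own
strategy; these proportions are the beliefs satisfying (iii). The payoff change is therefore a sum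
over information sets of (probability of reaching it under `b`) × (one-shot gain in conditional
payoff). If `t` satisfies (ii), every such gain is nonpositive, so `t` is a best reply in all
subgames simultaneously, and `b` does as well as `t` in a subgame iff `b` satisfies local
rationality wherever it reaches. An information set is reached with positive probability from the
root of some subgame iff it is reached from the root of its smallest one, which is the condition
`C^i_{I_i^j}(I_i^j|β) > 0`. A strategy satisfying (ii) always exists by backward induction.
-/

section OptimalMix

variable {α 𝕜 : Type*}

/-- `p` charges only maximizers of `U` over `s`: the local rationality condition imposed on a
strategy `p` at an information set with actions `s` and conditional payoffs `U`. -/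
def SupportedOnMax [LT 𝕜] [Zero 𝕜] (s : Finset α) (p U : α → 𝕜) : Prop :=
  ∀ a ∈ s, ∀ a' ∈ s, U a < U a' → p a = 0

lemma SupportedOnMax.congr [LT 𝕜] [Zero 𝕜] {s : Finset α} {p U V : α → 𝕜}
    (hp : SupportedOnMax s p U) (hUV : ∀ a ∈ s, U a = V a) : SupportedOnMax s p V :=
  fun a ha a' ha' hlt ↦ hp a ha a' ha' (by rwa [hUV a ha, hUV a' ha'])

variable [Ring 𝕜]

lemma sum_mul_sub_eq {s : Finset α} {p : α → 𝕜} (hp : ∑ a ∈ s, p a = 1) (U : α → 𝕜) (M : 𝕜) :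
    ∑ a ∈ s, p a * (M - U a) = M - ∑ a ∈ s, p a * U a := by
  simp only [mul_sub, Finset.sum_sub_distrib, ← Finset.sum_mul, hp, one_mul]

variable [LinearOrder 𝕜] [IsStrictOrderedRing 𝕜] {s : Finset α} {p q U : α → 𝕜}

lemma sum_mul_le_sup' (hs : s.Nonempty) (hp₀ : ∀ a ∈ s, 0 ≤ p a) (hp : ∑ a ∈ s, p a = 1) :
    ∑ a ∈ s, p a * U a ≤ s.sup' hs U := by
  rw [← sub_nonneg, ← sum_mul_sub_eq hp]
  exact Finset.sum_nonneg fun a ha ↦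
    mul_nonneg (hp₀ a ha) (sub_nonneg.2 (Finset.le_sup' U ha))

lemma sum_mul_eq_sup'_iff (hs : s.Nonempty) (hp₀ : ∀ a ∈ s, 0 ≤ p a) (hp : ∑ a ∈ s, p a = 1) :
    ∑ a ∈ s, p a * U a = s.sup' hs U ↔ SupportedOnMax s p U := by
  have hnonneg : ∀ a ∈ s, 0 ≤ p a * (s.sup' hs U - U a) := fun a ha ↦
    mul_nonneg (hp₀ a ha) (sub_nonneg.2 (Finset.le_sup' U ha))
  rw [eq_comm, ← sub_eq_zero, ← sum_mul_sub_eq hp, Finset.sum_eq_zero_iff_of_nonneg hnonneg]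
  refine ⟨fun h a ha a' ha' hlt ↦ ?_, fun h a ha ↦ ?_⟩
  · exact (mul_eq_zero.1 (h a ha)).resolve_right
      (sub_pos.2 (hlt.trans_le (Finset.le_sup' U ha'))).ne'
  · obtain ⟨x, hx, hmax⟩ := Finset.exists_mem_eq_sup' hs U
    rcases (Finset.le_sup' U ha).lt_or_eq with hlt | heq
    · rw [h a ha x hx (hmax ▸ hlt), zero_mul]
    · rw [heq, sub_self, mul_zero]

lemma SupportedOnMax.sum_sub_mul_nonpos (hq : SupportedOnMax s q U) (hq₀ : ∀ a ∈ s, 0 ≤ q a)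
    (hq₁ : ∑ a ∈ s, q a = 1) (hp₀ : ∀ a ∈ s, 0 ≤ p a) (hp₁ : ∑ a ∈ s, p a = 1) :
    ∑ a ∈ s, (p a - q a) * U a ≤ 0 := by
  have hs : s.Nonempty := Finset.nonempty_of_sum_ne_zero (hp₁ ▸ one_ne_zero)
  simp only [sub_mul, Finset.sum_sub_distrib, (sum_mul_eq_sup'_iff hs hq₀ hq₁).2 hq, sub_nonpos]
  exact sum_mul_le_sup' hs hp₀ hp₁

lemma SupportedOnMax.sum_sub_mul_eq_zero_iff (hq : SupportedOnMax s q U)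
    (hq₀ : ∀ a ∈ s, 0 ≤ q a) (hq₁ : ∑ a ∈ s, q a = 1) (hp₀ : ∀ a ∈ s, 0 ≤ p a)
    (hp₁ : ∑ a ∈ s, p a = 1) :
    ∑ a ∈ s, (p a - q a) * U a = 0 ↔ SupportedOnMax s p U := by
  have hs : s.Nonempty := Finset.nonempty_of_sum_ne_zero (hp₁ ▸ one_ne_zero)
  simp only [sub_mul, Finset.sum_sub_distrib, (sum_mul_eq_sup'_iff hs hq₀ hq₁).2 hq, sub_eq_zero,
    sum_mul_eq_sup'_iff hs hp₀ hp₁]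

lemma exists_supportedOnMax (hs : s.Nonempty) (U : α → 𝕜) :
    ∃ p : α → 𝕜, (∀ a ∈ s, 0 ≤ p a) ∧ ∑ a ∈ s, p a = 1 ∧ SupportedOnMax s p U := by
  obtain ⟨x, hx, hmax⟩ := s.exists_max_image U hs
  have hnonneg : 0 ≤ (Pi.single x 1 : α → 𝕜) := Pi.single_nonneg.2 zero_le_one
  refine ⟨Pi.single x 1, fun a _ ↦ hnonneg a, ?_, fun a _ a' ha' hlt ↦ ?_⟩
  · rw [Finset.sum_pi_single', if_pos hx]
  · exact Pi.single_eq_of_ne (by rintro rfl; exact (hmax a' ha').not_gt hlt) 1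

end OptimalMix

lemma exists_normalization {α 𝕜 : Type*} [Field 𝕜] [LinearOrder 𝕜] [IsStrictOrderedRing 𝕜]
    {s : Finset α} (hs : s.Nonempty) {w : α → 𝕜} (hw : ∀ x ∈ s, 0 ≤ w x) :
    ∃ p : α → 𝕜, (∀ x ∈ s, 0 ≤ p x) ∧ ∑ x ∈ s, p x = 1 ∧
      ∀ x ∈ s, (∑ y ∈ s, w y) * p x = w x := by
  by_cases h0 : ∑ y ∈ s, w y = 0
  · have hcard : (s.card : 𝕜) ≠ 0 := Nat.cast_ne_zero.2 hs.card_ne_zero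
    refine ⟨fun _ ↦ (s.card : 𝕜)⁻¹, fun _ _ ↦ by positivity, by simp [hcard], fun x hx ↦ ?_⟩
    rw [h0, zero_mul, (Finset.sum_eq_zero_iff_of_nonneg hw).1 h0 x hx]
  · refine ⟨fun x ↦ w x / ∑ y ∈ s, w y, fun x hx ↦ div_nonneg (hw x hx) (Finset.sum_nonneg hw),
      ?_, fun x _ ↦ mul_div_cancel₀ _ h0⟩
    rw [← Finset.sum_div, div_self h0]

namespace EFG

variable {G : EFG} {i : Fin G.n} {j : ℕ}

/-! ### Histories and information sets -/

lemma mem_A {h : List ℕ} {a : ℕ} : a ∈ G.A h ↔ h ++ [a] ∈ G.H :=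
  ⟨fun ha ↦ (Finset.mem_filter.1 ha).2, fun ha ↦ Finset.mem_filter.2 ⟨G.act_mem h a ha, ha⟩⟩

lemma mem_Zset {h : List ℕ} : h ∈ G.Zset ↔ h ∈ G.H ∧ G.A h = ∅ := by
  simp only [Zset, Finset.mem_filter, Finset.eq_empty_iff_forall_notMem, mem_A]

lemma mem_H_of_mem_Info (hj : j < G.m i) {h : List ℕ} (hh : h ∈ G.Info i j) : h ∈ G.H :=
  ((G.info_spec i j h hj).1 hh).1

lemma P_of_mem_Info (hj : j < G.m i) {h : List ℕ} (hh : h ∈ G.Info i j) : G.P h = some i :=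
  ((G.info_spec i j h hj).1 hh).2.1

lemma infoIdx_of_mem_Info (hj : j < G.m i) {h : List ℕ} (hh : h ∈ G.Info i j) :
    G.infoIdx h = j :=
  ((G.info_spec i j h hj).1 hh).2.2.2

lemma infoIdx_lt_and_mem_Info {h : List ℕ} {a : ℕ} (ha : h ++ [a] ∈ G.H) (hP : G.P h = some i) :
    G.infoIdx h < G.m i ∧ h ∈ G.Info i (G.infoIdx h) := by
  have hh : h ∈ G.H := G.prefixClosed _ ha _ (List.prefix_append _ _)
  have hlt := G.infoIdx_lt i h hh hP ⟨a, ha⟩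
  exact ⟨hlt, (G.info_spec i _ h hlt).2 ⟨hh, hP, ⟨a, ha⟩, rfl⟩⟩

lemma infoA_eq_A (hj : j < G.m i) {h : List ℕ} (hh : h ∈ G.Info i j) : G.infoA i j = G.A h := by
  ext a
  simp only [infoA, Finset.mem_sup, mem_A]
  exact ⟨fun ⟨h', hh', ha⟩ ↦ (G.info_actions i j hj h' hh' h hh a).1 ha, fun ha ↦ ⟨h, hh, ha⟩⟩

lemma mem_Info_of_mem_infoA (hj : j < G.m i) {h : List ℕ} {a : ℕ} (ha : a ∈ G.infoA i j)
    (hha : h ++ [a] ∈ G.H) : h ∈ G.Info i j := by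
  obtain ⟨h', hh'⟩ := G.info_nonempty i j hj
  rw [infoA_eq_A hj hh', mem_A] at ha
  have hh : h ∈ G.H := G.prefixClosed _ hha _ (List.prefix_append _ _)
  obtain ⟨hP, hidx⟩ := G.act_unique h' h a (mem_H_of_mem_Info hj hh') hh ha hha
  exact (G.info_spec i j h hj).2
    ⟨hh, hP ▸ P_of_mem_Info hj hh', ⟨a, hha⟩, hidx ▸ infoIdx_of_mem_Info hj hh'⟩

@[elab_as_elim]
lemma backward_induction {p : List ℕ → Prop}
    (ih : ∀ h ∈ G.H, (∀ c ∈ G.A h, p (h ++ [c])) → p h) {h : List ℕ} (hh : h ∈ G.H) : p h := by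
  induction hk : G.H.sup List.length - h.length using Nat.strong_induction_on generalizing h with
  | _ k IH =>
    refine ih h hh fun c hc ↦ IH _ ?_ (mem_A.1 hc) rfl
    have hle : (h ++ [c]).length ≤ G.H.sup List.length :=
      Finset.le_sup (f := List.length) (mem_A.1 hc)
    rw [List.length_append, List.length_singleton] at hle ⊢
    omega

/-! ### Perfect recall -/

lemma recordFrom_append (i : Fin G.n) (l l' pre : List ℕ) :
    G.recordFrom i pre (l ++ l') = G.recordFrom i pre l ++ G.recordFrom i (pre ++ l) l' := by
  induction l generalizing pre with
  | nil => simp [recordFrom]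
  | cons c l ih => simp [recordFrom, ih]

lemma PerfectRecall.recordFrom_eq (hPR : G.PerfectRecall) (hj : j < G.m i) {r l l' : List ℕ}
    (hl : r ++ l ∈ G.Info i j) (hl' : r ++ l' ∈ G.Info i j) :
    G.recordFrom i r l = G.recordFrom i r l' := by
  have heq := hPR i j hj _ hl _ hl'
  rw [recordFrom_append, recordFrom_append] at heq
  simpa using heq

variable (G) in
/-- The number of moves player `i` has made before reaching `I_i^j`, the measure for backward
induction on the information sets of player `i`. Under perfect recall all histories in `I_i^j`
have records of the same length, so the supremum is their common value. -/
def ownDepth (i : Fin G.n) (j : ℕ) : ℕ :=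
  (G.Info i j).sup fun h ↦ (G.recordFrom i [] h).length

lemma PerfectRecall.ownDepth_eq (hPR : G.PerfectRecall) (hj : j < G.m i) {h : List ℕ}
    (hh : h ∈ G.Info i j) : G.ownDepth i j = (G.recordFrom i [] h).length :=
  le_antisymm (Finset.sup_le fun h' hh' ↦ by rw [hPR i j hj h' hh' h hh])
    (Finset.le_sup (f := fun h ↦ (G.recordFrom i [] h).length) hh)

lemma PerfectRecall.ownDepth_lt (hPR : G.PerfectRecall) {q : ℕ} (hj : j < G.m i)
    (hq : q < G.m i) {h h' : List ℕ} {a : ℕ} (hh : h ∈ G.Info i j) (hh' : h' ∈ G.Info i q)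
    (hp : h ++ [a] <+: h') : G.ownDepth i j < G.ownDepth i q := by
  obtain ⟨l, rfl⟩ := hp
  rw [hPR.ownDepth_eq hj hh, hPR.ownDepth_eq hq hh', List.append_assoc, recordFrom_append]
  simp [recordFrom, P_of_mem_Info hj hh]

lemma PerfectRecall.eq_of_prefix (hPR : G.PerfectRecall) (hj : j < G.m i) {h h' : List ℕ}
    (hh : h ∈ G.Info i j) (hh' : h' ∈ G.Info i j) (hp : h <+: h') : h = h' := by
  obtain ⟨_ | ⟨a, l⟩, rfl⟩ := hp
  · exact (List.append_nil h).symm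
  · exact absurd (hPR.ownDepth_lt hj hj hh hh' (a := a) ⟨l, by simp⟩) (lt_irrefl _)

/-! ### Reach probabilities -/

variable (G) in
/-- The probability of reaching `h` from its prefix `r`. -/
def probFrom (δ : G.Profile) (r h : List ℕ) : ℝ := G.prodAlong δ r (h.drop r.length)

variable (G) in
/-- The probability of reaching the part of `I_i^j` that lies below `r`, starting from `r`. -/
def infoProbFrom (i : Fin G.n) (j : ℕ) (δ : G.Profile) (r : List ℕ) : ℝ :=
  ∑ h ∈ G.Info i j with r <+: h, G.probFrom δ r h

lemma prodAlong_append (δ : G.Profile) (l l' pre : List ℕ) :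
    G.prodAlong δ pre (l ++ l') = G.prodAlong δ pre l * G.prodAlong δ (pre ++ l) l' := by
  induction l generalizing pre with
  | nil => simp [prodAlong]
  | cons c l ih => simp [prodAlong, ih, mul_assoc]

@[simp] lemma probFrom_append (δ : G.Profile) (r l : List ℕ) :
    G.probFrom δ r (r ++ l) = G.prodAlong δ r l := by
  rw [probFrom, List.drop_left]

@[simp] lemma probFrom_self (δ : G.Profile) (r : List ℕ) : G.probFrom δ r r = 1 := by
  simp [probFrom, prodAlong]

lemma probFrom_mul_probFrom (δ : G.Profile) {r s h : List ℕ} (hrs : r <+: s) (hsh : s <+: h) :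
    G.probFrom δ r s * G.probFrom δ s h = G.probFrom δ r h := by
  obtain ⟨l, rfl⟩ := hrs
  obtain ⟨l', rfl⟩ := hsh
  rw [probFrom_append, probFrom_append, List.append_assoc, probFrom_append, prodAlong_append]

lemma probFrom_snoc (δ : G.Profile) (r : List ℕ) (c : ℕ) :
    G.probFrom δ r (r ++ [c]) = G.moveProb δ r c := by
  simp [prodAlong]

lemma moveProb_nonneg {δ : G.Profile} (hδ : G.IsBehProfile δ) {h : List ℕ} {c : ℕ}
    (hc : h ++ [c] ∈ G.H) : 0 ≤ G.moveProb δ h c := by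
  rw [moveProb]
  cases hP : G.P h with
  | none => exact G.fc_nonneg h c
  | some p =>
    obtain ⟨hlt, hmem⟩ := infoIdx_lt_and_mem_Info hc hP
    exact (hδ p _ hlt).1 c (infoA_eq_A hlt hmem ▸ mem_A.2 hc)

lemma prodAlong_nonneg {δ : G.Profile} (hδ : G.IsBehProfile δ) (l pre : List ℕ)
    (hl : pre ++ l ∈ G.H) : 0 ≤ G.prodAlong δ pre l := by
  induction l generalizing pre with
  | nil => exact zero_le_one
  | cons c l ih =>
    rw [List.append_cons] at hl
    exact mul_nonneg (moveProb_nonneg hδ (G.prefixClosed _ hl _ (List.prefix_append _ _)))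
      (ih _ hl)

lemma prodAlongNot_nonneg {δ : G.Profile} (hδ : G.IsBehProfile δ) (i : Fin G.n)
    (l pre : List ℕ) (hl : pre ++ l ∈ G.H) : 0 ≤ G.prodAlongNot i δ pre l := by
  induction l generalizing pre with
  | nil => exact zero_le_one
  | cons c l ih =>
    rw [List.append_cons] at hl
    refine mul_nonneg ?_ (ih _ hl)
    split_ifs
    · exact zero_le_one
    · exact moveProb_nonneg hδ (G.prefixClosed _ hl _ (List.prefix_append _ _))

lemma infoProbFrom_nonneg {δ : G.Profile} (hδ : G.IsBehProfile δ) (hj : j < G.m i)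
    (r : List ℕ) : 0 ≤ G.infoProbFrom i j δ r := by
  refine Finset.sum_nonneg fun h hh ↦ ?_
  obtain ⟨hmem, l, rfl⟩ := Finset.mem_filter.1 hh
  rw [probFrom_append]
  exact prodAlong_nonneg hδ _ _ (mem_H_of_mem_Info hj hmem)

lemma infoProbFrom_eq_sum (δ : G.Profile) {r : List ℕ} (hr : ∀ h ∈ G.Info i j, r <+: h) :
    G.infoProbFrom i j δ r = ∑ h ∈ G.Info i j, G.probFrom δ r h := by
  rw [infoProbFrom, Finset.filter_true_of_mem hr]

lemma infoProbFrom_eq_zero (δ : G.Profile) {r : List ℕ} (hr : ∀ h ∈ G.Info i j, ¬ r <+: h) :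
    G.infoProbFrom i j δ r = 0 := by
  rw [infoProbFrom, Finset.filter_false_of_mem hr, Finset.sum_empty]

/-! ### Replacing one player's strategy -/

@[simp] lemma replace_self (β : G.Profile) (i : Fin G.n) : G.replace β i (β i) = β := by
  funext p
  unfold replace
  split_ifs with hp
  · rw [hp]
  · rfl

lemma IsBehProfile.replace {β : G.Profile} (hβ : G.IsBehProfile β) {b : ℕ → ℕ → ℝ}
    (hb : G.IsBehStrategy i b) : G.IsBehProfile (G.replace β i b) := by
  intro p
  unfold EFG.replace
  split_ifs with hp
  · exact hp ▸ hb
  · exact hβ p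

lemma moveProb_replace_of_P_eq (β : G.Profile) (b : ℕ → ℕ → ℝ) {h : List ℕ}
    (hP : G.P h = some i) (c : ℕ) : G.moveProb (G.replace β i b) h c = b (G.infoIdx h) c := by
  simp [moveProb, replace, hP]

lemma moveProb_replace_of_P_ne (β : G.Profile) (b : ℕ → ℕ → ℝ) {h : List ℕ}
    (hP : G.P h ≠ some i) (c : ℕ) : G.moveProb (G.replace β i b) h c = G.moveProb β h c := by
  unfold moveProb
  cases hp : G.P h with
  | none => rfl
  | some p =>
    have hpi : p ≠ i := fun h ↦ hP (h ▸ hp)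
    simp [replace, hpi]

lemma moveProb_replace_congr (β : G.Profile) {b b' : ℕ → ℕ → ℝ} {h : List ℕ}
    (hb : G.P h = some i → b (G.infoIdx h) = b' (G.infoIdx h)) (c : ℕ) :
    G.moveProb (G.replace β i b) h c = G.moveProb (G.replace β i b') h c := by
  by_cases hP : G.P h = some i
  · rw [moveProb_replace_of_P_eq β b hP, moveProb_replace_of_P_eq β b' hP, hb hP]
  · rw [moveProb_replace_of_P_ne β b hP, moveProb_replace_of_P_ne β b' hP]

lemma moveProb_rho (β βt : G.Profile) {h : List ℕ}
    (hh : G.P h = some i → ∃ h' ∈ G.Info i (G.infoIdx h), ∃ b ∈ h', b ∈ G.infoA i j) (c : ℕ) :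
    G.moveProb (G.rho i j β βt) h c = G.moveProb (G.replace β i (βt i)) h c := by
  unfold moveProb
  cases hP : G.P h with
  | none => rfl
  | some p =>
    by_cases hpi : p = i
    · subst hpi
      simp [rho, replace, hh hP]
    · simp [rho, replace, hpi]

lemma prodAlong_replace (β : G.Profile) (i : Fin G.n) (b : ℕ → ℕ → ℝ) (l pre : List ℕ) :
    G.prodAlong (G.replace β i b) pre l =
      G.prodAlongNot i β pre l * ((G.recordFrom i pre l).map (Function.uncurry b)).prod := by
  induction l generalizing pre with
  | nil => simp [prodAlong, prodAlongNot, recordFrom]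
  | cons c l ih =>
    simp only [prodAlong, prodAlongNot, recordFrom, ih]
    by_cases hP : G.P pre = some i
    · simp only [moveProb_replace_of_P_eq β b hP, if_pos hP, List.singleton_append, List.map_cons,
        List.prod_cons, Function.uncurry_apply_pair]
      ring
    · simp only [moveProb_replace_of_P_ne β b hP, if_neg hP, List.nil_append]
      ring

/-! ### Continuation payoffs -/

variable (G) in
/-- The expected total reward collected at and below `r` when play starts at `r`, follows `δ`
and collects `f h` at each history `h` it visits. -/
def rewardFrom (δ : G.Profile) (f : List ℕ → ℝ) (r : List ℕ) : ℝ :=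
  ∑ h ∈ G.H with r <+: h, f h * G.probFrom δ r h

lemma uExpFrom_eq_rewardFrom (i : Fin G.n) (δ : G.Profile) (r : List ℕ) :
    G.uExpFrom i δ r = G.rewardFrom δ (fun h ↦ if G.A h = ∅ then G.u i h else 0) r := by
  simp only [uExpFrom, rewardFrom, ite_mul, zero_mul, ← Finset.sum_filter, Finset.filter_filter,
    probFrom]
  refine Finset.sum_congr (Finset.ext fun h ↦ ?_) fun _ _ ↦ rfl
  simp only [Finset.mem_filter, mem_Zset]
  tauto

lemma prefix_iff_eq_or_exists_snoc_prefix {r h : List ℕ} (hh : h ∈ G.H) :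
    r <+: h ↔ h = r ∨ ∃ c ∈ G.A r, r ++ [c] <+: h := by
  constructor
  · rintro ⟨_ | ⟨c, l⟩, rfl⟩
    · exact .inl (List.append_nil r)
    · have hp : r ++ [c] <+: r ++ c :: l := ⟨l, by simp⟩
      exact .inr ⟨c, mem_A.2 (G.prefixClosed _ hh _ hp), hp⟩
  · rintro (rfl | ⟨c, -, hp⟩)
    · exact List.prefix_rfl
    · exact (List.prefix_append _ _).trans hp

lemma sum_prefix_eq_add_sum {r : List ℕ} (hr : r ∈ G.H) (f : List ℕ → ℝ) :
    ∑ h ∈ G.H with r <+: h, f h =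
      f r + ∑ c ∈ G.A r, ∑ h ∈ G.H with r ++ [c] <+: h, f h := by
  have hset : G.H.filter (r <+: ·) =
      insert r ((G.A r).biUnion fun c ↦ G.H.filter (r ++ [c] <+: ·)) := by
    ext h
    simp only [Finset.mem_filter, Finset.mem_insert, Finset.mem_biUnion]
    constructor
    · rintro ⟨hh, hp⟩
      rcases (prefix_iff_eq_or_exists_snoc_prefix hh).1 hp with rfl | ⟨c, hc, hp⟩
      exacts [.inl rfl, .inr ⟨c, hc, hh, hp⟩]
    · rintro (rfl | ⟨c, -, hh, hp⟩)
      exacts [⟨hr, List.prefix_rfl⟩, ⟨hh, (List.prefix_append _ _).trans hp⟩]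
  rw [hset, Finset.sum_insert, Finset.sum_biUnion]
  · intro c _ c' _ hcc
    refine Finset.disjoint_left.2 fun h hc hc' ↦ hcc ?_
    obtain ⟨l, rfl⟩ := (Finset.mem_filter.1 hc).2
    obtain ⟨l', hl'⟩ := (Finset.mem_filter.1 hc').2
    simp only [List.append_assoc, List.singleton_append, List.append_cancel_left_eq,
      List.cons.injEq] at hl'
    exact hl'.1.symm
  · simp only [Finset.mem_biUnion, Finset.mem_filter, not_exists, not_and]
    intro c _ _ hp
    simpa using hp.length_le

lemma rewardFrom_eq_add_sum (δ : G.Profile) (f : List ℕ → ℝ) {r : List ℕ} (hr : r ∈ G.H) :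
    G.rewardFrom δ f r =
      f r + ∑ c ∈ G.A r, G.moveProb δ r c * G.rewardFrom δ f (r ++ [c]) := by
  simp only [rewardFrom]
  rw [sum_prefix_eq_add_sum hr, probFrom_self, mul_one]
  congr 1
  refine Finset.sum_congr rfl fun c _ ↦ ?_
  rw [Finset.mul_sum]
  refine Finset.sum_congr rfl fun h hh ↦ ?_
  rw [← probFrom_mul_probFrom δ (List.prefix_append r [c]) (Finset.mem_filter.1 hh).2,
    probFrom_snoc, mul_left_comm]

/-- The performance difference identity for Markov decision processes. -/
lemma rewardFrom_sub_rewardFrom (δ τ : G.Profile) (f : List ℕ → ℝ) {r : List ℕ} (hr : r ∈ G.H) :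
    G.rewardFrom δ f r - G.rewardFrom τ f r = G.rewardFrom δ (fun h ↦
      ∑ c ∈ G.A h, (G.moveProb δ h c - G.moveProb τ h c) * G.rewardFrom τ f (h ++ [c])) r := by
  refine backward_induction (fun r hr ih ↦ ?_) hr
  rw [rewardFrom_eq_add_sum δ _ hr, rewardFrom_eq_add_sum δ _ hr, rewardFrom_eq_add_sum τ _ hr,
    add_sub_add_left_eq_sub, ← Finset.sum_sub_distrib, ← Finset.sum_add_distrib]
  refine Finset.sum_congr rfl fun c hc ↦ ?_
  rw [← ih c hc]
  ring

lemma uExpFrom_congr (p : Fin G.n) {δ δ' : G.Profile} {r : List ℕ} (hr : r ∈ G.H)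
    (h : ∀ h ∈ G.H, r <+: h → ∀ c ∈ G.A h, G.moveProb δ h c = G.moveProb δ' h c) :
    G.uExpFrom p δ r = G.uExpFrom p δ' r := by
  rw [uExpFrom_eq_rewardFrom, uExpFrom_eq_rewardFrom, ← sub_eq_zero,
    rewardFrom_sub_rewardFrom _ _ _ hr]
  refine Finset.sum_eq_zero fun h' hh' ↦ ?_
  obtain ⟨hmem, hp⟩ := Finset.mem_filter.1 hh'
  refine mul_eq_zero_of_left (Finset.sum_eq_zero fun c hc ↦ ?_) _
  rw [h h' hmem hp c hc, sub_self, zero_mul]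

lemma rewardFrom_eq_sum_Info (δ : G.Profile) {f : List ℕ → ℝ}
    (hf : ∀ h ∈ G.H, (∀ j < G.m i, h ∉ G.Info i j) → f h = 0) (r : List ℕ) :
    G.rewardFrom δ f r = ∑ j ∈ Finset.range (G.m i), ∑ h ∈ G.Info i j with r <+: h,
      f h * G.probFrom δ r h := by
  have hdisj : (Finset.range (G.m i) : Set ℕ).PairwiseDisjoint
      fun j ↦ (G.Info i j).filter (r <+: ·) := by
    intro j hj k hk hjk
    refine Finset.disjoint_left.2 fun h hhj hhk ↦ hjk ?_
    rw [← infoIdx_of_mem_Info (Finset.mem_range.1 hj) (Finset.mem_filter.1 hhj).1,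
      infoIdx_of_mem_Info (Finset.mem_range.1 hk) (Finset.mem_filter.1 hhk).1]
  rw [rewardFrom, ← Finset.sum_biUnion hdisj]
  symm
  refine Finset.sum_subset (fun h hh ↦ ?_) fun h hh hnot ↦ ?_
  · simp only [Finset.mem_biUnion, Finset.mem_filter, Finset.mem_range] at hh ⊢
    obtain ⟨j, hj, hmem, hp⟩ := hh
    exact ⟨mem_H_of_mem_Info hj hmem, hp⟩
  · obtain ⟨hH, hp⟩ := Finset.mem_filter.1 hh
    rw [hf h hH fun j hj hmem ↦ hnot (Finset.mem_biUnion.2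
      ⟨j, Finset.mem_range.2 hj, Finset.mem_filter.2 ⟨hmem, hp⟩⟩), zero_mul]

lemma uExpFrom_replace_sub (β : G.Profile) (b t : ℕ → ℕ → ℝ) {r : List ℕ} (hr : r ∈ G.H) :
    G.uExpFrom i (G.replace β i b) r - G.uExpFrom i (G.replace β i t) r =
      ∑ j ∈ Finset.range (G.m i), ∑ h ∈ G.Info i j with r <+: h,
        (∑ a ∈ G.infoA i j, (b j a - t j a) * G.uExpFrom i (G.replace β i t) (h ++ [a])) *
          G.probFrom (G.replace β i b) r h := by
  rw [uExpFrom_eq_rewardFrom, uExpFrom_eq_rewardFrom, rewardFrom_sub_rewardFrom _ _ _ hr,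
    rewardFrom_eq_sum_Info (i := i)]
  · refine Finset.sum_congr rfl fun j hj ↦ Finset.sum_congr rfl fun h hh ↦ ?_
    have hj := Finset.mem_range.1 hj
    have hmem := (Finset.mem_filter.1 hh).1
    have hP := P_of_mem_Info hj hmem
    simp only [uExpFrom_eq_rewardFrom, infoA_eq_A hj hmem, moveProb_replace_of_P_eq β _ hP,
      infoIdx_of_mem_Info hj hmem]
  · intro h _ hnot
    refine Finset.sum_eq_zero fun a ha ↦ ?_
    have hP : G.P h ≠ some i := fun hP ↦
      have ⟨hlt, hmem⟩ := infoIdx_lt_and_mem_Info (mem_A.1 ha) hP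
      hnot _ hlt hmem
    rw [moveProb_replace_of_P_ne β b hP, moveProb_replace_of_P_ne β t hP, sub_self, zero_mul]

/-! ### Conditional payoffs -/

lemma nuAux_append_cons (δ : G.Profile) (w : List ℕ → ℝ) (l pre rest : List ℕ) (a : ℕ)
    (hl : pre ++ l ∈ G.Info i j) (hfirst : ∀ l', l' <+: l → pre ++ l' ∈ G.Info i j → l' = l) :
    G.nuAux i j δ w pre (l ++ a :: rest) =
      w (pre ++ l) * G.prodAlong δ (pre ++ l ++ [a]) rest := by
  induction l generalizing pre with
  | nil => simp_all [nuAux]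
  | cons c l ih =>
    have hpre : pre ∉ G.Info i j := fun hmem ↦ by
      simpa using hfirst [] List.nil_prefix (by simpa using hmem)
    simp only [List.cons_append, nuAux, hpre, if_false]
    rw [ih (pre ++ [c]) (by simpa using hl) fun l' hl' hmem ↦ by
      simpa using hfirst (c :: l') (by simpa using hl') (by simpa using hmem)]
    simp

lemma PerfectRecall.nu_eq (hPR : G.PerfectRecall) (hj : j < G.m i) (δ : G.Profile)
    (μ : G.Belief) {h z : List ℕ} {a : ℕ} (hh : h ∈ G.Info i j) (hp : h ++ [a] <+: z) :
    G.nu i j δ μ z = μ i j h * G.probFrom δ (h ++ [a]) z := by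
  obtain ⟨l, rfl⟩ := hp
  have hnu := nuAux_append_cons δ (μ i j) h [] l a (by simpa using hh) fun l' hl' hmem ↦
    hPR.eq_of_prefix hj (by simpa using hmem) hh hl'
  simpa [nu, probFrom] using hnu

lemma PerfectRecall.uCond_eq_sum (hPR : G.PerfectRecall) (hj : j < G.m i) {a : ℕ}
    (ha : a ∈ G.infoA i j) (δ : G.Profile) (μ : G.Belief) :
    G.uCond i j a δ μ = ∑ h ∈ G.Info i j, μ i j h * G.uExpFrom i δ (h ++ [a]) := by
  simp only [uCond, uExpFrom, Finset.mul_sum]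
  rw [Finset.sum_sigma']
  symm
  refine Finset.sum_bij (fun x _ ↦ x.2) ?_ ?_ ?_ ?_
  · rintro ⟨h, z⟩ hx
    simp only [Finset.mem_sigma, Finset.mem_filter] at hx ⊢
    exact ⟨hx.2.1, hx.2.2.subset (by simp)⟩
  · rintro ⟨h, z⟩ hx ⟨h', z'⟩ hx' rfl
    simp only [Finset.mem_sigma, Finset.mem_filter] at hx hx'
    have hp := (List.prefix_append h [a]).trans hx.2.2
    have hp' := (List.prefix_append h' [a]).trans hx'.2.2
    obtain rfl : h = h' := (List.prefix_or_prefix_of_prefix hp hp').elim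
      (hPR.eq_of_prefix hj hx.1 hx'.1) fun h ↦ (hPR.eq_of_prefix hj hx'.1 hx.1 h).symm
    rfl
  · intro z hz
    obtain ⟨hz, haz⟩ := Finset.mem_filter.1 hz
    obtain ⟨h, l, rfl⟩ := List.append_of_mem haz
    have hp : h ++ [a] <+: h ++ a :: l := ⟨l, by simp⟩
    have hh := mem_Info_of_mem_infoA hj ha (G.prefixClosed _ (mem_Zset.1 hz).1 _ hp)
    exact ⟨⟨h, h ++ a :: l⟩, by simp [hh, hz], rfl⟩
  · rintro ⟨h, z⟩ hx
    simp only [Finset.mem_sigma, Finset.mem_filter] at hx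
    rw [hPR.nu_eq hj δ μ hx.1 hx.2.2, probFrom]
    ring

lemma PerfectRecall.uCond_congr (hPR : G.PerfectRecall) (hj : j < G.m i) {a : ℕ}
    (ha : a ∈ G.infoA i j) {δ δ' : G.Profile} (μ : G.Belief)
    (h : ∀ h ∈ G.Info i j, ∀ h', h ++ [a] <+: h' → ∀ c, h' ++ [c] ∈ G.H →
      G.moveProb δ h' c = G.moveProb δ' h' c) :
    G.uCond i j a δ μ = G.uCond i j a δ' μ := by
  rw [hPR.uCond_eq_sum hj ha, hPR.uCond_eq_sum hj ha]
  refine Finset.sum_congr rfl fun h' hh' ↦ ?_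
  rw [uExpFrom_congr i (mem_A.1 (infoA_eq_A hj hh' ▸ ha)) fun k _ hp c hc ↦
    h h' hh' k hp c (mem_A.1 hc)]

lemma PerfectRecall.uCond_rho (hPR : G.PerfectRecall) (hj : j < G.m i) {a : ℕ}
    (ha : a ∈ G.infoA i j) (β βt : G.Profile) (μ : G.Belief) :
    G.uCond i j a (G.rho i j β βt) μ = G.uCond i j a (G.replace β i (βt i)) μ :=
  hPR.uCond_congr hj ha μ fun _ _ h' hp _ hc ↦ moveProb_rho β βt
    (fun hP ↦ ⟨h', (infoIdx_lt_and_mem_Info hc hP).2, a, hp.subset (by simp), ha⟩) _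

lemma PerfectRecall.uCond_replace_congr (hPR : G.PerfectRecall) (hj : j < G.m i) {a : ℕ}
    (ha : a ∈ G.infoA i j) (β : G.Profile) (μ : G.Belief) {b b' : ℕ → ℕ → ℝ}
    (hb : ∀ q, G.ownDepth i j < G.ownDepth i q → b q = b' q) :
    G.uCond i j a (G.replace β i b) μ = G.uCond i j a (G.replace β i b') μ := by
  refine hPR.uCond_congr hj ha μ fun h hh h' hp c hc ↦ moveProb_replace_congr β (fun hP ↦ ?_) c
  obtain ⟨hlt, hmem⟩ := infoIdx_lt_and_mem_Info hc hP
  exact hb _ (hPR.ownDepth_lt hj hlt hh hmem hp)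

/-! ### Smallest subgames and consistent beliefs -/

lemma exists_isSubgameRoot_length_eq_sgDepthInfo (i : Fin G.n) (j : ℕ) :
    ∃ s, G.IsSubgameRoot s ∧ (∀ h ∈ G.Info i j, s <+: h) ∧ s.length = G.sgDepthInfo i j := by
  have hne : (G.H.filter fun r ↦ G.IsSubgameRoot r ∧ ∀ h ∈ G.Info i j, r <+: h).Nonempty :=
    ⟨[], Finset.mem_filter.2 ⟨G.empty_mem, ⟨G.empty_mem, fun _ _ _ ↦ .inl fun _ _ ↦
      List.nil_prefix⟩, fun _ _ ↦ List.nil_prefix⟩⟩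
  obtain ⟨s, hs, hlen⟩ := Finset.exists_mem_eq_sup _ hne List.length
  obtain ⟨-, hroot, hsI⟩ := Finset.mem_filter.1 hs
  exact ⟨s, hroot, hsI, hlen.symm⟩

lemma IsSubgameRoot.length_le_sgDepthInfo {r : List ℕ} (hr : G.IsSubgameRoot r)
    (hrI : ∀ h ∈ G.Info i j, r <+: h) : r.length ≤ G.sgDepthInfo i j :=
  Finset.le_sup (f := List.length) (Finset.mem_filter.2 ⟨hr.1, hr, hrI⟩)

lemma CInfo_eq_infoProbFrom (δ : G.Profile) {s : List ℕ} (hs : ∀ h ∈ G.Info i j, s <+: h)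
    (hlen : s.length = G.sgDepthInfo i j) : G.CInfo i j δ = G.infoProbFrom i j δ s := by
  rw [infoProbFrom_eq_sum δ hs]
  refine Finset.sum_congr rfl fun h hh ↦ ?_
  rw [Ch, probFrom, ← hlen, ← List.prefix_iff_eq_take.1 (hs h hh)]

lemma exists_isSubgameRoot_infoProbFrom_eq_CInfo (i : Fin G.n) (j : ℕ) (δ : G.Profile) :
    ∃ s, G.IsSubgameRoot s ∧ G.infoProbFrom i j δ s = G.CInfo i j δ :=
  let ⟨s, hroot, hsI, hlen⟩ := exists_isSubgameRoot_length_eq_sgDepthInfo i j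
  ⟨s, hroot, (CInfo_eq_infoProbFrom δ hsI hlen).symm⟩

lemma infoProbFrom_eq_mul (δ : G.Profile) {r s : List ℕ} (hrs : r <+: s)
    (hs : ∀ h ∈ G.Info i j, s <+: h) :
    G.infoProbFrom i j δ r = G.probFrom δ r s * G.infoProbFrom i j δ s := by
  rw [infoProbFrom_eq_sum δ fun h hh ↦ hrs.trans (hs h hh), infoProbFrom_eq_sum δ hs,
    Finset.mul_sum]
  exact Finset.sum_congr rfl fun h hh ↦ (probFrom_mul_probFrom δ hrs (hs h hh)).symm

lemma CInfo_pos_of_infoProbFrom_ne_zero {δ : G.Profile} (hδ : G.IsBehProfile δ)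
    (hj : j < G.m i) {r : List ℕ} (hr : G.IsSubgameRoot r)
    (hne : G.infoProbFrom i j δ r ≠ 0) : 0 < G.CInfo i j δ := by
  have hrI := (hr.2 i j hj).resolve_right fun h ↦ hne (infoProbFrom_eq_zero δ h)
  obtain ⟨s, -, hsI, hlen⟩ := exists_isSubgameRoot_length_eq_sgDepthInfo i j
  obtain ⟨h, hh⟩ := G.info_nonempty i j hj
  have hrs : r <+: s := List.prefix_of_prefix_length_le (hrI h hh) (hsI h hh)
    (hlen ▸ hr.length_le_sgDepthInfo hrI)
  rw [infoProbFrom_eq_mul δ hrs hsI] at hne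
  rw [CInfo_eq_infoProbFrom δ hsI hlen]
  exact (infoProbFrom_nonneg hδ hj s).lt_of_ne' (right_ne_zero_of_mul hne)

lemma PerfectRecall.sgDepthHist_eq (hPR : G.PerfectRecall) (hj : j < G.m i)
    (hI : (G.Info i j).Nontrivial) {h : List ℕ} (hh : h ∈ G.Info i j) :
    G.sgDepthHist h = G.sgDepthInfo i j := by
  unfold sgDepthHist sgDepthInfo
  congr 1
  refine Finset.filter_congr fun r _ ↦ and_congr_right fun hr ↦ ⟨fun hp ↦ ?_, fun hall ↦ ?_⟩
  · exact (hr.2 i j hj).resolve_right fun hout ↦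
      hout h hh (hp.trans (List.dropLast_prefix h))
  · obtain ⟨h', hh', hne⟩ := hI.exists_ne h
    obtain ⟨l, rfl⟩ := hall h hh
    have hl : l ≠ [] := by
      rintro rfl
      exact hne (hPR.eq_of_prefix hj hh hh' (by simpa using hall h' hh')).symm
    rw [List.dropLast_append_of_ne_nil hl]
    exact List.prefix_append _ _

/-- Player `i`'s own factor is the same for all histories of `I_i^j`, by perfect recall, so the
reach probabilities are proportional to the weights `Y^i` whatever player `i` plays. -/
lemma PerfectRecall.exists_probFrom_eq_mul_Yh (hPR : G.PerfectRecall) (hj : j < G.m i)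
    (hI : (G.Info i j).Nontrivial) (β : G.Profile) (b : ℕ → ℕ → ℝ) {r : List ℕ}
    (hr : G.IsSubgameRoot r) (hrI : ∀ h ∈ G.Info i j, r <+: h) :
    ∃ k, ∀ h ∈ G.Info i j, G.probFrom (G.replace β i b) r h = k * G.Yh i β h := by
  obtain ⟨s, -, hsI, hlen⟩ := exists_isSubgameRoot_length_eq_sgDepthInfo i j
  obtain ⟨h₀, hh₀⟩ := hI.nonempty
  obtain ⟨l₀, rfl⟩ := hsI h₀ hh₀
  have hrs : r <+: s := List.prefix_of_prefix_length_le (hrI _ hh₀) (hsI _ hh₀)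
    (hlen ▸ hr.length_le_sgDepthInfo hrI)
  refine ⟨G.probFrom (G.replace β i b) r s *
    ((G.recordFrom i s l₀).map (Function.uncurry b)).prod, fun h hh ↦ ?_⟩
  obtain ⟨l, rfl⟩ := hsI h hh
  have hY : G.Yh i β (s ++ l) = G.prodAlongNot i β s l := by
    rw [Yh, hPR.sgDepthHist_eq hj hI hh, ← hlen, List.take_left, List.drop_left]
  rw [← probFrom_mul_probFrom _ hrs (List.prefix_append s l), probFrom_append, prodAlong_replace,
    hPR.recordFrom_eq hj hh hh₀, hY]
  ring

lemma PerfectRecall.probFrom_eq_mul_belief (hPR : G.PerfectRecall) (hj : j < G.m i)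
    {β : G.Profile} {μ : G.Belief} (hμ : G.IsBelief μ) (hY : G.YConsistent β μ)
    (b : ℕ → ℕ → ℝ) {r : List ℕ} (hr : G.IsSubgameRoot r) (hrI : ∀ h ∈ G.Info i j, r <+: h)
    {h : List ℕ} (hh : h ∈ G.Info i j) :
    G.probFrom (G.replace β i b) r h =
      G.infoProbFrom i j (G.replace β i b) r * μ i j h := by
  rw [infoProbFrom_eq_sum _ hrI]
  rcases Finset.Nonempty.exists_eq_singleton_or_nontrivial ⟨h, hh⟩ with ⟨h₀, hI⟩ | hI
  · have hμ₁ := (hμ i j hj).2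
    obtain rfl : h = h₀ := Finset.mem_singleton.1 (hI ▸ hh)
    rw [hI, Finset.sum_singleton] at hμ₁ ⊢
    rw [hμ₁, mul_one]
  · obtain ⟨k, hk⟩ := hPR.exists_probFrom_eq_mul_Yh hj hI β b hr hrI
    rw [Finset.sum_congr rfl hk, ← Finset.mul_sum, hk h hh, ← hY i j hj h hh, YInfo, mul_assoc]

lemma Yh_nonneg {β : G.Profile} (hβ : G.IsBehProfile β) (hj : j < G.m i) {h : List ℕ}
    (hh : h ∈ G.Info i j) : 0 ≤ G.Yh i β h :=
  prodAlongNot_nonneg hβ i _ _ (by rw [List.take_append_drop]; exact mem_H_of_mem_Info hj hh)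

lemma exists_isBelief_yConsistent {β : G.Profile} (hβ : G.IsBehProfile β) :
    ∃ μ : G.Belief, G.IsBelief μ ∧ G.YConsistent β μ := by
  have hex : ∀ (i : Fin G.n) (j : ℕ), ∃ p : List ℕ → ℝ, j < G.m i →
      (∀ h ∈ G.Info i j, 0 ≤ p h) ∧ ∑ h ∈ G.Info i j, p h = 1 ∧
        ∀ h ∈ G.Info i j, G.YInfo i j β * p h = G.Yh i β h := by
    intro i j
    by_cases hj : j < G.m i
    · obtain ⟨p, hp⟩ := exists_normalization (G.info_nonempty i j hj) fun h hh ↦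
        Yh_nonneg hβ hj hh
      exact ⟨p, fun _ ↦ hp⟩
    · exact ⟨0, fun h ↦ absurd h hj⟩
  choose μ hμ using hex
  exact ⟨μ, fun i j hj ↦ ⟨(hμ i j hj).1, (hμ i j hj).2.1⟩, fun i j hj ↦ (hμ i j hj).2.2⟩

/-! ### Sequentially rational strategies -/

variable (G) in
/-- The strategy `t` of player `i`, played against `β`, is rational at `I_i^j` for the conditional
payoffs computed with the belief `μ`. When `t = β̃ i` this is condition (ii) at `I_i^j`, because
`ϱ^i_{I_i^j}(β, β̃)` and `replace β i (β̃ i)` agree after `I_i^j`. -/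
def RationalAt (β : G.Profile) (μ : G.Belief) (i : Fin G.n) (t : ℕ → ℕ → ℝ) (j : ℕ) : Prop :=
  SupportedOnMax (G.infoA i j) (t j) fun a ↦ G.uCond i j a (G.replace β i t) μ

lemma infoA_nonempty (hj : j < G.m i) : (G.infoA i j).Nonempty := by
  obtain ⟨h, hh⟩ := G.info_nonempty i j hj
  obtain ⟨-, -, ⟨a, ha⟩, -⟩ := (G.info_spec i j h hj).1 hh
  exact ⟨a, infoA_eq_A hj hh ▸ mem_A.2 ha⟩

lemma IsBehStrategy.update {t : ℕ → ℕ → ℝ} (ht : G.IsBehStrategy i t) {p : ℕ → ℝ}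
    (hp₀ : ∀ a ∈ G.infoA i j, 0 ≤ p a) (hp₁ : ∑ a ∈ G.infoA i j, p a = 1) :
    G.IsBehStrategy i (Function.update t j p) := by
  intro k hk
  rcases eq_or_ne k j with rfl | hkj
  · rw [Function.update_self]
    exact ⟨hp₀, hp₁⟩
  · rw [Function.update_of_ne hkj]
    exact ht k hk

lemma PerfectRecall.uCond_update (hPR : G.PerfectRecall) {k : ℕ} (hk : k < G.m i)
    (hjk : G.ownDepth i j ≤ G.ownDepth i k) {a : ℕ} (ha : a ∈ G.infoA i k) (β : G.Profile)
    (μ : G.Belief) (t : ℕ → ℕ → ℝ) (p : ℕ → ℝ) :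
    G.uCond i k a (G.replace β i (Function.update t j p)) μ =
      G.uCond i k a (G.replace β i t) μ :=
  hPR.uCond_replace_congr hk ha β μ fun _ hq ↦
    Function.update_of_ne (fun h ↦ (h ▸ hjk).not_gt hq) _ _

lemma PerfectRecall.exists_rationalAt_of_subset (hPR : G.PerfectRecall) {β : G.Profile}
    (hβ : G.IsBehProfile β) (μ : G.Belief) (i : Fin G.n) {S : Finset ℕ}
    (hS : ∀ q ∈ S, q < G.m i) :
    ∃ t, G.IsBehStrategy i t ∧ ∀ j ∈ S, G.RationalAt β μ i t j := by
  induction S using Finset.induction_on_min_value (G.ownDepth i) with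
  | empty => exact ⟨β i, hβ i, by simp⟩
  | insert j S hjS hmin ih =>
    obtain ⟨t, ht, hopt⟩ := ih fun q hq ↦ hS q (Finset.mem_insert_of_mem hq)
    have hj := hS j (Finset.mem_insert_self j S)
    obtain ⟨p, hp₀, hp₁, hmax⟩ := exists_supportedOnMax (infoA_nonempty hj)
      fun a ↦ G.uCond i j a (G.replace β i t) μ
    refine ⟨Function.update t j p, ht.update hp₀ hp₁, fun k hk ↦ ?_⟩
    rcases Finset.mem_insert.1 hk with rfl | hkS
    · rw [RationalAt, Function.update_self]
      exact hmax.congr fun a ha ↦ (hPR.uCond_update hj le_rfl ha β μ t p).symm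
    · rw [RationalAt, Function.update_of_ne (ne_of_mem_of_not_mem hkS hjS)]
      exact (hopt k hkS).congr fun a ha ↦ (hPR.uCond_update (hS k hk) (hmin k hkS) ha β μ t p).symm

lemma PerfectRecall.exists_rationalAt (hPR : G.PerfectRecall) {β : G.Profile}
    (hβ : G.IsBehProfile β) (μ : G.Belief) (i : Fin G.n) :
    ∃ t, G.IsBehStrategy i t ∧ ∀ j < G.m i, G.RationalAt β μ i t j := by
  simpa using hPR.exists_rationalAt_of_subset hβ μ i (S := Finset.range (G.m i)) (by simp)

/-! ### Regret decomposition -/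

section Regret

variable {β : G.Profile} {μ : G.Belief} {b t : ℕ → ℕ → ℝ} {r : List ℕ}

lemma PerfectRecall.uExpFrom_replace_sub_eq_sum (hPR : G.PerfectRecall) (hμ : G.IsBelief μ)
    (hY : G.YConsistent β μ) (hr : G.IsSubgameRoot r) (b t : ℕ → ℕ → ℝ) :
    G.uExpFrom i (G.replace β i b) r - G.uExpFrom i (G.replace β i t) r =
      ∑ j ∈ Finset.range (G.m i), G.infoProbFrom i j (G.replace β i b) r *
        ∑ a ∈ G.infoA i j, (b j a - t j a) * G.uCond i j a (G.replace β i t) μ := by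
  rw [uExpFrom_replace_sub β b t hr.1]
  refine Finset.sum_congr rfl fun j hj ↦ ?_
  have hj := Finset.mem_range.1 hj
  rcases hr.2 i j hj with hin | hout
  · rw [Finset.filter_true_of_mem hin]
    simp only [Finset.mul_sum, Finset.sum_mul]
    rw [Finset.sum_comm]
    refine Finset.sum_congr rfl fun a ha ↦ ?_
    rw [hPR.uCond_eq_sum hj ha, Finset.mul_sum, Finset.mul_sum]
    refine Finset.sum_congr rfl fun h hh ↦ ?_
    rw [hPR.probFrom_eq_mul_belief hj hμ hY b hr hin hh]
    ring
  · rw [Finset.filter_false_of_mem hout, infoProbFrom_eq_zero _ hout, Finset.sum_empty, zero_mul]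

lemma infoProbFrom_mul_sum_nonpos (hβ : G.IsBehProfile β) (ht : G.IsBehStrategy i t)
    (hj : j < G.m i) (hopt : G.RationalAt β μ i t j) (hb : G.IsBehStrategy i b) (r : List ℕ) :
    G.infoProbFrom i j (G.replace β i b) r *
      ∑ a ∈ G.infoA i j, (b j a - t j a) * G.uCond i j a (G.replace β i t) μ ≤ 0 :=
  mul_nonpos_of_nonneg_of_nonpos (infoProbFrom_nonneg (hβ.replace hb) hj r)
    (hopt.sum_sub_mul_nonpos (ht j hj).1 (ht j hj).2 (hb j hj).1 (hb j hj).2)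

lemma PerfectRecall.uExpFrom_replace_le_of_rationalAt (hPR : G.PerfectRecall)
    (hμ : G.IsBelief μ) (hY : G.YConsistent β μ) (hβ : G.IsBehProfile β)
    (ht : G.IsBehStrategy i t) (hopt : ∀ j < G.m i, G.RationalAt β μ i t j)
    (hr : G.IsSubgameRoot r) (hb : G.IsBehStrategy i b) :
    G.uExpFrom i (G.replace β i b) r ≤ G.uExpFrom i (G.replace β i t) r := by
  rw [← sub_nonpos, hPR.uExpFrom_replace_sub_eq_sum hμ hY hr]
  exact Finset.sum_nonpos fun j hj ↦
    have hj := Finset.mem_range.1 hj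
    infoProbFrom_mul_sum_nonpos hβ ht hj (hopt j hj) hb r

lemma PerfectRecall.uExpFrom_replace_eq_iff_of_rationalAt (hPR : G.PerfectRecall)
    (hμ : G.IsBelief μ) (hY : G.YConsistent β μ) (hβ : G.IsBehProfile β)
    (ht : G.IsBehStrategy i t) (hopt : ∀ j < G.m i, G.RationalAt β μ i t j)
    (hr : G.IsSubgameRoot r) (hb : G.IsBehStrategy i b) :
    G.uExpFrom i (G.replace β i b) r = G.uExpFrom i (G.replace β i t) r ↔
      ∀ j < G.m i, G.infoProbFrom i j (G.replace β i b) r = 0 ∨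
        SupportedOnMax (G.infoA i j) (b j) fun a ↦ G.uCond i j a (G.replace β i t) μ := by
  rw [← sub_eq_zero, hPR.uExpFrom_replace_sub_eq_sum hμ hY hr,
    Finset.sum_eq_zero_iff_of_nonpos fun j hj ↦
      have hj := Finset.mem_range.1 hj
      infoProbFrom_mul_sum_nonpos hβ ht hj (hopt j hj) hb r]
  simp only [Finset.mem_range, mul_eq_zero]
  exact forall₂_congr fun j hj ↦ or_congr_right <|
    (hopt j hj).sum_sub_mul_eq_zero_iff (ht j hj).1 (ht j hj).2 (hb j hj).1 (hb j hj).2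

end Regret

lemma PerfectRecall.isSubgamePerfect_iff_supportedOnMax (hPR : G.PerfectRecall) {β βt : G.Profile}
    {μ : G.Belief} (hβ : G.IsBehProfile β) (hβt : G.IsBehProfile βt) (hμ : G.IsBelief μ)
    (hY : G.YConsistent β μ) (hopt : ∀ i, ∀ j < G.m i, G.RationalAt β μ i (βt i) j) :
    G.IsSubgamePerfect β ↔ ∀ i, ∀ j < G.m i, 0 < G.CInfo i j β →
      SupportedOnMax (G.infoA i j) (β i j)
        fun a ↦ G.uCond i j a (G.replace β i (βt i)) μ := by
  have hiff {r : List ℕ} (hr : G.IsSubgameRoot r) (i : Fin G.n) :=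
    hPR.uExpFrom_replace_eq_iff_of_rationalAt hμ hY hβ (hβt i) (hopt i) hr (hβ i)
  have hle {r : List ℕ} (hr : G.IsSubgameRoot r) (i : Fin G.n) {b : ℕ → ℕ → ℝ} :=
    hPR.uExpFrom_replace_le_of_rationalAt hμ hY hβ (hβt i) (hopt i) hr (b := b)
  simp only [replace_self] at hiff
  constructor
  · intro hSPE i j hj hpos
    obtain ⟨s, hs, hC⟩ := exists_isSubgameRoot_infoProbFrom_eq_CInfo i j β
    have heq : G.uExpFrom i β s = G.uExpFrom i (G.replace β i (βt i)) s :=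
      le_antisymm (by simpa using hle hs i (hβ i)) (hSPE.2 s hs i (βt i) (hβt i))
    exact ((hiff hs i).1 heq j hj).resolve_left (hC ▸ hpos.ne')
  · refine fun hmax ↦ ⟨hβ, fun r hr i b hb ↦ (hle hr i hb).trans_eq ((hiff hr i).2 ?_).symm⟩
    exact fun j hj ↦ or_iff_not_imp_left.2 fun hne ↦
      hmax i j hj (CInfo_pos_of_infoProbFrom_ne_zero hβ hj hr hne)

lemma PerfectRecall.supportedOnMax_rho_iff (hPR : G.PerfectRecall) (hj : j < G.m i)
    (β βt : G.Profile) (μ : G.Belief) (p : ℕ → ℝ) :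
    SupportedOnMax (G.infoA i j) p (fun a ↦ G.uCond i j a (G.rho i j β βt) μ) ↔
      SupportedOnMax (G.infoA i j) p (fun a ↦ G.uCond i j a (G.replace β i (βt i)) μ) :=
  ⟨fun h ↦ h.congr fun _ ha ↦ hPR.uCond_rho hj ha β βt μ,
    fun h ↦ h.congr fun _ ha ↦ (hPR.uCond_rho hj ha β βt μ).symm⟩

end EFG

/-- Definition 7 (characterization of subgame perfect equilibrium under conditional
expected payoffs): `β*` is a subgame perfect equilibrium in behavioral strategies iff there
exist `β̃*` and a belief system `μ*` satisfying the stated local rationality and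
consistency conditions, with the condition on `β*` imposed only where
`C^i_{I_i^j}(I_i^j|β*) > 0`. -/
theorem stmt12 (G : EFG) (hPR : G.PerfectRecall) (β : G.Profile) (hβ : G.IsBehProfile β) :
    G.IsSubgamePerfect β ↔
      ∃ (βt : G.Profile) (μ : G.Belief), G.IsBehProfile βt ∧
        (∀ (i : Fin G.n) (j : ℕ), j < G.m i → ∀ a' ∈ G.infoA i j, ∀ a'' ∈ G.infoA i j,
          0 < G.CInfo i j β →
          G.uCond i j a' (G.rho i j β βt) μ < G.uCond i j a'' (G.rho i j β βt) μ →
          β i j a' = 0) ∧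
        (∀ (i : Fin G.n) (j : ℕ), j < G.m i → ∀ a' ∈ G.infoA i j, ∀ a'' ∈ G.infoA i j,
          G.uCond i j a' (G.rho i j β βt) μ < G.uCond i j a'' (G.rho i j β βt) μ →
          βt i j a' = 0) ∧
        G.IsBelief μ ∧ G.YConsistent β μ := by
  constructor
  · intro hSPE
    obtain ⟨μ, hμ, hY⟩ := EFG.exists_isBelief_yConsistent hβ
    choose βt hβt hopt using hPR.exists_rationalAt hβ μ
    have hmax := (hPR.isSubgamePerfect_iff_supportedOnMax hβ hβt hμ hY hopt).1 hSPE
    exact ⟨βt, μ, hβt,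
      fun i j hj a ha a' ha' hpos ↦
        (hPR.supportedOnMax_rho_iff hj β βt μ _).2 (hmax i j hj hpos) a ha a' ha',
      fun i j hj ↦ (hPR.supportedOnMax_rho_iff hj β βt μ _).2 (hopt i j hj), hμ, hY⟩
  · rintro ⟨βt, μ, hβt, hreached, hrational, hμ, hY⟩
    have hopt : ∀ i, ∀ j < G.m i, G.RationalAt β μ i (βt i) j := fun i j hj ↦
      (hPR.supportedOnMax_rho_iff hj β βt μ _).1 (hrational i j hj)
    exact (hPR.isSubgamePerfect_iff_supportedOnMax hβ hβt hμ hY hopt).2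
      fun i j hj hpos ↦ (hPR.supportedOnMax_rho_iff hj β βt μ _).1
        fun a ha a' ha' ↦ hreached i j hj a ha a' ha' hpos
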